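/- Fix α ∈ [0, 1/√2] and r ∈ [0,1]. Define, for x ∈ [0,1], f(α,x) = (α² − 1/4)·x, g(α,x) = (1/4)·√(x² + 8α²(2α² − 1)(x² − 1)), and h(α,x,r) = |f(α,x) + r·g(α,x)| + |f(α,x) − r·g(α,x)|. Then the function x ↦ h(α,x,r) is convex on the interval [0,1]. -/

import Mathlib

/-- `f(α,x) = (α² − 1/4)·x`. -/
noncomputable def fFun (α x : ℝ) : ℝ := (α ^ 2 - 1 / 4) * x

/-- `g(α,x) = (1/4)·√(x² + 8α²(2α² − 1)(x² − 1))`. -/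
noncomputable def gFun (α x : ℝ) : ℝ :=
  (1 / 4) * Real.sqrt (x ^ 2 + 8 * α ^ 2 * (2 * α ^ 2 - 1) * (x ^ 2 - 1))

/-- `h(α,x,r) = |f + r·g| + |f − r·g|`. -/
noncomputable def hFun (α x r : ℝ) : ℝ :=
  |fFun α x + r * gFun α x| + |fFun α x - r * gFun α x|

/-!
Since `|a + b| + |a - b| = 2 max |a| |b|`, the function `h` is twice the maximum of `|f|` and
`|r| g`. The radicand of `g` is affine in `x²`, and `1 - 8α²(1 - 2α²) = (4α² - 1)²` turns it into
`16 f² + 8α²(1 - 2α²)`. So `g` is the Euclidean norm of `(f, √c)` with `c = α²(1 - 2α²) / 2`,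
and both terms of the maximum are convex because `f` is linear in `x`.
-/

theorem abs_add_add_abs_sub {G : Type*} [AddCommGroup G] [LinearOrder G] [IsOrderedAddMonoid G]
    (a b : G) : |a + b| + |a - b| = 2 • max |a| |b| := by
  grind

theorem convexOn_sqrt_norm_sq_add {E : Type*} [SeminormedAddCommGroup E] [NormedSpace ℝ E]
    {c : ℝ} (hc : 0 ≤ c) : ConvexOn ℝ Set.univ (fun x : E => √(‖x‖ ^ 2 + c)) := by
  let incl : E →ₗ[ℝ] WithLp 2 (E × ℝ) :=
    (WithLp.linearEquiv 2 ℝ (E × ℝ)).symm.toLinearMap ∘ₗ LinearMap.inl ℝ E ℝ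
  have norm_incl_add (x : E) : ‖WithLp.toLp 2 ((0 : E), √c) + incl x‖ = √(‖x‖ ^ 2 + c) := by
    simp [incl, WithLp.prod_norm_eq_of_L2, Real.sq_sqrt hc]
  simpa only [Function.comp_def, norm_incl_add, Set.preimage_univ] using
    (convexOn_univ_norm.translate_right (WithLp.toLp 2 ((0 : E), √c))).comp_linearMap incl

theorem hFun_eq_two_mul_max (α x r : ℝ) :
    hFun α x r = 2 * max |fFun α x| (|r| * gFun α x) := by
  have hg : 0 ≤ gFun α x := by unfold gFun; positivity
  rw [hFun, abs_add_add_abs_sub, nsmul_eq_mul, Nat.cast_ofNat, abs_mul r, abs_of_nonneg hg]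

theorem gFun_eq_sqrt_fFun_sq_add (α x : ℝ) :
    gFun α x = √(fFun α x ^ 2 + α ^ 2 * (1 - 2 * α ^ 2) / 2) := by
  have radicand_eq : x ^ 2 + 8 * α ^ 2 * (2 * α ^ 2 - 1) * (x ^ 2 - 1) =
      4 ^ 2 * (fFun α x ^ 2 + α ^ 2 * (1 - 2 * α ^ 2) / 2) := by
    unfold fFun; ring
  rw [gFun, radicand_eq, Real.sqrt_mul (by positivity), Real.sqrt_sq (by positivity)]
  ring

theorem convexOn_abs_fFun (α : ℝ) : ConvexOn ℝ Set.univ (fun x => |fFun α x|) :=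
  (convexOn_univ_norm (E := ℝ)).comp_linearMap (LinearMap.mulLeft ℝ (α ^ 2 - 1 / 4))

theorem convexOn_gFun {α : ℝ} (hα : |α| ≤ 1 / √2) : ConvexOn ℝ Set.univ (gFun α) := by
  have sq_le : α ^ 2 ≤ 1 / 2 := by
    simpa [div_pow] using sq_le_sq' (abs_le.mp hα).1 (abs_le.mp hα).2
  have const_nonneg : 0 ≤ α ^ 2 * (1 - 2 * α ^ 2) / 2 := by
    have : 0 ≤ 1 - 2 * α ^ 2 := by linarith
    positivity
  refine ((convexOn_sqrt_norm_sq_add const_nonneg).comp_linearMap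
    (LinearMap.mulLeft ℝ (α ^ 2 - 1 / 4))).congr fun x _ => ?_
  simp only [gFun_eq_sqrt_fFun_sq_add, fFun, Function.comp_apply, LinearMap.mulLeft_apply,
    Real.norm_eq_abs, sq_abs]

theorem hFun_convexOn_general (α r : ℝ) (hα : |α| ≤ 1 / √2) :
    ConvexOn ℝ Set.univ (fun x => hFun α x r) := by
  simp only [hFun_eq_two_mul_max]
  exact ((convexOn_abs_fFun α).sup ((convexOn_gFun hα).smul (abs_nonneg r))).smul zero_le_two

theorem hFun_convexOn
    (α r : ℝ) (hα0 : 0 ≤ α) (hα : α ≤ 1 / Real.sqrt 2)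
    (hr0 : 0 ≤ r) (hr1 : r ≤ 1) :
    ConvexOn ℝ (Set.Icc (0 : ℝ) 1) (fun x => hFun α x r) :=
  (hFun_convexOn_general α r (by rwa [abs_of_nonneg hα0])).subset (Set.subset_univ _)
    (convex_Icc 0 1)
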